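/- For a double complex of complex vector spaces and every bidegree (p,q), the sequence 0 → D^{p,q} → H_BC^{p,q} → H_∂̄^{p,q} → E^{p,q} → F^{p,q} → 0 is exact, where the first map is induced by the inclusion im ∂̄ ∩ ker ∂ ⊆ ker ∂ ∩ ker ∂̄, the second and third maps are induced by the identity on representatives, and the last map is the natural projection. -/

import Mathlib

open Submodule

/-- A double complex of complex vector spaces, presented as a bigraded direct-sum
decomposition `K p q` of an ambient space `V`, together with anticommuting
differentials `d1 = ∂` (of bidegree `(1,0)`) and `d2 = ∂̄` (of bidegree `(0,1)`). -/
structure DoubleComplex (V : Type*) [AddCommGroup V] [Module ℂ V] where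
  K : ℤ → ℤ → Submodule ℂ V
  isInternal : DirectSum.IsInternal fun pq : ℤ × ℤ => K pq.1 pq.2
  d1 : V →ₗ[ℂ] V
  d2 : V →ₗ[ℂ] V
  d1_mem : ∀ p q : ℤ, ∀ x ∈ K p q, d1 x ∈ K (p + 1) q
  d2_mem : ∀ p q : ℤ, ∀ x ∈ K p q, d2 x ∈ K p (q + 1)
  d1_d1 : d1 ∘ₗ d1 = 0
  d2_d2 : d2 ∘ₗ d2 = 0
  anticomm : d1 ∘ₗ d2 + d2 ∘ₗ d1 = 0

/-- The dimension (as a natural number) of the quotient of a submodule `M` of `V`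
by (the trace on `M` of) a submodule `N`. -/
noncomputable def qdim {V : Type*} [AddCommGroup V] [Module ℂ V]
    (M N : Submodule ℂ V) : ℕ :=
  Module.finrank ℂ (↥M ⧸ N.comap M.subtype)

/-- The linear map between quotients `M₁/N₁ → M₂/N₂` induced by the identity,
for `M₁ ≤ M₂` and `N₁ ≤ N₂`. -/
def quotMap {V : Type*} [AddCommGroup V] [Module ℂ V] {M₁ N₁ M₂ N₂ : Submodule ℂ V}
    (hM : M₁ ≤ M₂) (hN : N₁ ≤ N₂) :
    (↥M₁ ⧸ N₁.comap M₁.subtype) →ₗ[ℂ] (↥M₂ ⧸ N₂.comap M₂.subtype) :=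
  Submodule.mapQ _ _ (Submodule.inclusion hM) fun _ hx => hN hx

namespace DoubleComplex

variable {V : Type*} [AddCommGroup V] [Module ℂ V] (D : DoubleComplex V)

/-- A double complex is bounded if only finitely many components are non-zero. -/
def Bounded : Prop := Set.Finite {pq : ℤ × ℤ | D.K pq.1 pq.2 ≠ ⊥}

lemma d1_d1_apply (x : V) : D.d1 (D.d1 x) = 0 := by
  simpa using LinearMap.ext_iff.mp D.d1_d1 x

lemma d2_d2_apply (x : V) : D.d2 (D.d2 x) = 0 := by
  simpa using LinearMap.ext_iff.mp D.d2_d2 x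

lemma anticomm_apply (x : V) : D.d1 (D.d2 x) + D.d2 (D.d1 x) = 0 := by
  simpa using LinearMap.ext_iff.mp D.anticomm x

/-- Numerator `ker ∂̄ ∩ K^{p,q}` of the Dolbeault cohomology. -/
def dolN (p q : ℤ) : Submodule ℂ V := LinearMap.ker D.d2 ⊓ D.K p q
/-- Denominator `∂̄ K^{p,q-1}` of the Dolbeault cohomology. -/
def dolD (p q : ℤ) : Submodule ℂ V := (D.K p (q - 1)).map D.d2
/-- Numerator `ker ∂ ∩ K^{p,q}` of the conjugate Dolbeault cohomology. -/
def conjN (p q : ℤ) : Submodule ℂ V := LinearMap.ker D.d1 ⊓ D.K p q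
/-- Denominator `∂ K^{p-1,q}` of the conjugate Dolbeault cohomology. -/
def conjD (p q : ℤ) : Submodule ℂ V := (D.K (p - 1) q).map D.d1
/-- Numerator `ker ∂ ∩ ker ∂̄ ∩ K^{p,q}` of the Bott-Chern cohomology. -/
def bcN (p q : ℤ) : Submodule ℂ V := LinearMap.ker D.d1 ⊓ LinearMap.ker D.d2 ⊓ D.K p q
/-- Denominator `∂∂̄ K^{p-1,q-1}` of the Bott-Chern cohomology. -/
def bcD (p q : ℤ) : Submodule ℂ V := (D.K (p - 1) (q - 1)).map (D.d1 ∘ₗ D.d2)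
/-- Numerator `ker ∂∂̄ ∩ K^{p,q}` of the Aeppli cohomology. -/
def aeN (p q : ℤ) : Submodule ℂ V := LinearMap.ker (D.d1 ∘ₗ D.d2) ⊓ D.K p q
/-- Denominator `∂ K^{p-1,q} + ∂̄ K^{p,q-1}` of the Aeppli cohomology. -/
def aeD (p q : ℤ) : Submodule ℂ V := (D.K (p - 1) q).map D.d1 ⊔ (D.K p (q - 1)).map D.d2

/-- The degree-`k` part `Tot^k = ⊕_{p+q=k} K^{p,q}` of the total complex. -/
def Tot (k : ℤ) : Submodule ℂ V := ⨆ p : ℤ, D.K p (k - p)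
/-- The total differential `d = ∂ + ∂̄`. -/
def dT : V →ₗ[ℂ] V := D.d1 + D.d2
/-- Numerator `ker d ∩ Tot^k` of the de Rham cohomology of the total complex. -/
def dRN (k : ℤ) : Submodule ℂ V := LinearMap.ker D.dT ⊓ D.Tot k
/-- Denominator `d (Tot^{k-1})` of the de Rham cohomology of the total complex. -/
def dRD (k : ℤ) : Submodule ℂ V := (D.Tot (k - 1)).map D.dT

/-- Hodge number `h_∂̄^{p,q}`. -/
noncomputable def hDol (p q : ℤ) : ℕ := qdim (D.dolN p q) (D.dolD p q)
/-- Conjugate Hodge number `h_∂^{p,q}`. -/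
noncomputable def hConj (p q : ℤ) : ℕ := qdim (D.conjN p q) (D.conjD p q)
/-- Bott-Chern number `h_BC^{p,q}`. -/
noncomputable def hBC (p q : ℤ) : ℕ := qdim (D.bcN p q) (D.bcD p q)
/-- Aeppli number `h_A^{p,q}`. -/
noncomputable def hAe (p q : ℤ) : ℕ := qdim (D.aeN p q) (D.aeD p q)
/-- Betti number `b_k` of the total complex. -/
noncomputable def b (k : ℤ) : ℕ := qdim (D.dRN k) (D.dRD k)

/-- The `∂∂̄`-lemma property:
`ker ∂ ∩ ker ∂̄ ∩ (im ∂ + im ∂̄) ∩ K^{p,q} = ∂∂̄ K^{p-1,q-1}` for every `(p,q)`. -/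
def SatisfiesDdbarLemma : Prop :=
  ∀ p q : ℤ,
    LinearMap.ker D.d1 ⊓ LinearMap.ker D.d2 ⊓ (D.conjD p q ⊔ D.dolD p q) ⊓ D.K p q =
      D.bcD p q

end DoubleComplex

namespace DoubleComplex

variable {V : Type*} [AddCommGroup V] [Module ℂ V] (D : DoubleComplex V)

lemma dolD_le_ker (p q : ℤ) : D.dolD p q ≤ LinearMap.ker D.d2 := by
  rintro x ⟨y, -, rfl⟩
  exact LinearMap.mem_ker.mpr (D.d2_d2_apply y)

lemma dolD_le_K (p q : ℤ) : D.dolD p q ≤ D.K p q := by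
  rintro x ⟨y, hy, rfl⟩
  have h := D.d2_mem p (q - 1) y hy
  rwa [show q - 1 + 1 = q by ring] at h

lemma conjD_le_ker (p q : ℤ) : D.conjD p q ≤ LinearMap.ker D.d1 := by
  rintro x ⟨y, -, rfl⟩
  exact LinearMap.mem_ker.mpr (D.d1_d1_apply y)

lemma conjD_le_K (p q : ℤ) : D.conjD p q ≤ D.K p q := by
  rintro x ⟨y, hy, rfl⟩
  have h := D.d1_mem (p - 1) q y hy
  rwa [show p - 1 + 1 = p by ring] at h

lemma ker_d2_le_ker_comp : LinearMap.ker D.d2 ≤ LinearMap.ker (D.d1 ∘ₗ D.d2) := by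
  intro x hx
  have hx' : D.d2 x = 0 := hx
  simp only [LinearMap.mem_ker, LinearMap.comp_apply, hx', map_zero]

lemma ker_d1_le_ker_comp : LinearMap.ker D.d1 ≤ LinearMap.ker (D.d1 ∘ₗ D.d2) := by
  intro x hx
  have hx' : D.d1 x = 0 := hx
  have h := D.anticomm_apply x
  rw [hx', map_zero, add_zero] at h
  exact LinearMap.mem_ker.mpr h

lemma bcD_le_dolD (p q : ℤ) : D.bcD p q ≤ D.dolD p q := by
  rintro x ⟨y, hy, rfl⟩
  refine ⟨-(D.d1 y), neg_mem ?_, ?_⟩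
  · have h := D.d1_mem (p - 1) (q - 1) y hy
    rwa [show p - 1 + 1 = p by ring] at h
  · rw [map_neg, LinearMap.comp_apply]
    exact neg_eq_of_add_eq_zero_left (D.anticomm_apply y)

lemma bcD_le_conjD (p q : ℤ) : D.bcD p q ≤ D.conjD p q := by
  rintro x ⟨y, hy, rfl⟩
  refine ⟨D.d2 y, ?_, rfl⟩
  have h := D.d2_mem (p - 1) (q - 1) y hy
  rwa [show q - 1 + 1 = q by ring] at h

end DoubleComplex

namespace DoubleComplex

variable {V : Type*} [AddCommGroup V] [Module ℂ V] (D : DoubleComplex V)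

/-- Numerator `im ∂̄ ∩ ker ∂ ∩ K^{p,q}` of the Varouchas space
`D^{p,q} = (im ∂̄ ∩ ker ∂)/im ∂∂̄`. -/
def varDN (p q : ℤ) : Submodule ℂ V := D.dolD p q ⊓ LinearMap.ker D.d1

/-- Denominator `(ker ∂ + im ∂̄) ∩ K^{p,q}` of the Varouchas space
`E^{p,q} = ker ∂∂̄/(ker ∂ + im ∂̄)`. -/
def varED (p q : ℤ) : Submodule ℂ V := (LinearMap.ker D.d1 ⊓ D.K p q) ⊔ D.dolD p q

/-- Denominator `(ker ∂̄ + ker ∂) ∩ K^{p,q}` of the Varouchas space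
`F^{p,q} = ker ∂∂̄/(ker ∂̄ + ker ∂)`. -/
def varFD (p q : ℤ) : Submodule ℂ V :=
  (LinearMap.ker D.d2 ⊓ D.K p q) ⊔ (LinearMap.ker D.d1 ⊓ D.K p q)

/-- The map `D^{p,q} → H_BC^{p,q}` induced by the inclusion
`im ∂̄ ∩ ker ∂ ⊆ ker ∂ ∩ ker ∂̄`. -/
def mapDBC (p q : ℤ) :
    (↥(D.varDN p q) ⧸ (D.bcD p q).comap (D.varDN p q).subtype) →ₗ[ℂ]
    (↥(D.bcN p q) ⧸ (D.bcD p q).comap (D.bcN p q).subtype) :=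
  quotMap
    (le_inf (le_inf inf_le_right (inf_le_left.trans (D.dolD_le_ker p q)))
      (inf_le_left.trans (D.dolD_le_K p q)))
    le_rfl

/-- The map `H_BC^{p,q} → H_∂̄^{p,q}` induced by the identity on representatives. -/
def mapBCDol (p q : ℤ) :
    (↥(D.bcN p q) ⧸ (D.bcD p q).comap (D.bcN p q).subtype) →ₗ[ℂ]
    (↥(D.dolN p q) ⧸ (D.dolD p q).comap (D.dolN p q).subtype) :=
  quotMap (le_inf (inf_le_left.trans inf_le_right) inf_le_right) (D.bcD_le_dolD p q)

/-- The map `H_∂̄^{p,q} → E^{p,q}` induced by the identity on representatives. -/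
def mapDolE (p q : ℤ) :
    (↥(D.dolN p q) ⧸ (D.dolD p q).comap (D.dolN p q).subtype) →ₗ[ℂ]
    (↥(D.aeN p q) ⧸ (D.varED p q).comap (D.aeN p q).subtype) :=
  quotMap (inf_le_inf_right (D.K p q) D.ker_d2_le_ker_comp) le_sup_right

/-- The natural projection `E^{p,q} → F^{p,q}`. -/
def mapEF (p q : ℤ) :
    (↥(D.aeN p q) ⧸ (D.varED p q).comap (D.aeN p q).subtype) →ₗ[ℂ]
    (↥(D.aeN p q) ⧸ (D.varFD p q).comap (D.aeN p q).subtype) :=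
  quotMap le_rfl
    (sup_le le_sup_right
      ((le_inf (D.dolD_le_ker p q) (D.dolD_le_K p q)).trans le_sup_left))

end DoubleComplex

/-!
All four maps are induced by inclusions of subspaces, so exactness is a statement about the lattice
of subspaces of `V`: with `N₂ ≤ N₃`, the sequence `M₁ ⧸ N₁ → M₂ ⧸ N₂ → M₃ ⧸ N₃` is exact at the
middle term if and only if `M₁ + M₂ ∩ N₂ = M₂ ∩ N₃`. At `H_BC` this follows from
`im ∂∂̄ ⊆ im ∂̄ ∩ ker ∂`, and at `E` from `im ∂̄ ⊆ ker ∂̄` and `ker ∂̄ + ker ∂ ⊆ ker ∂∂̄`;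
at `H_∂̄` it is Dedekind's modular law
`ker ∂̄ ∩ (ker ∂ + im ∂̄) = ker ∂̄ ∩ ker ∂ + im ∂̄`.
-/

lemma map_mkQ_comap_subtype_eq_iff {R V : Type*} [Ring R] [AddCommGroup V] [Module R V]
    {M N A B : Submodule R V} :
    (A.comap M.subtype).map (N.comap M.subtype).mkQ =
        (B.comap M.subtype).map (N.comap M.subtype).mkQ ↔
      M ⊓ A ⊔ M ⊓ N = M ⊓ B ⊔ M ⊓ N := by
  rw [← (comap_injective_of_surjective (mkQ_surjective _)).eq_iff, comap_map_mkQ, comap_map_mkQ,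
    ← (map_injective_of_injective M.injective_subtype).eq_iff, Submodule.map_sup,
    Submodule.map_sup, map_comap_subtype, map_comap_subtype, map_comap_subtype,
    sup_comm, sup_comm (M ⊓ N)]

section QuotMap

variable {V : Type*} [AddCommGroup V] [Module ℂ V] {M₁ N₁ M₂ N₂ M₃ N₃ : Submodule ℂ V}

lemma ker_quotMap (hM : M₁ ≤ M₂) (hN : N₁ ≤ N₂) :
    LinearMap.ker (quotMap hM hN) =
      (N₂.comap M₁.subtype).map (N₁.comap M₁.subtype).mkQ := by
  rw [quotMap, ker_mapQ, ← comap_comp, subtype_comp_inclusion]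

lemma range_quotMap (hM : M₁ ≤ M₂) (hN : N₁ ≤ N₂) :
    LinearMap.range (quotMap hM hN) =
      (M₁.comap M₂.subtype).map (N₂.comap M₂.subtype).mkQ := by
  rw [quotMap, range_mapQ, range_inclusion]

lemma quotMap_injective_iff (hM : M₁ ≤ M₂) (hN : N₁ ≤ N₂) :
    Function.Injective (quotMap hM hN) ↔ M₁ ⊓ N₂ ≤ N₁ := by
  rw [← LinearMap.ker_eq_bot, ker_quotMap, ← le_bot_iff, map_le_iff_le_comap,
    comap_bot, ker_mkQ, ← map_le_iff_le_comap, map_comap_subtype]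

lemma quotMap_surjective_iff (hM : M₁ ≤ M₂) (hN : N₁ ≤ N₂) :
    Function.Surjective (quotMap hM hN) ↔ M₁ ⊔ M₂ ⊓ N₂ = M₂ := by
  have htop : (M₂.comap M₂.subtype).map (N₂.comap M₂.subtype).mkQ = ⊤ := by
    rw [comap_subtype_self, Submodule.map_top, range_mkQ]
  rw [← LinearMap.range_eq_top, range_quotMap, ← htop, map_mkQ_comap_subtype_eq_iff,
    inf_eq_right.mpr hM, inf_idem, sup_inf_self]

lemma range_quotMap_eq_ker_quotMap_iff (hM : M₁ ≤ M₂) (hN : N₁ ≤ N₂) (hM' : M₂ ≤ M₃)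
    (hN' : N₂ ≤ N₃) :
    LinearMap.range (quotMap hM hN) = LinearMap.ker (quotMap hM' hN') ↔
      M₁ ⊔ M₂ ⊓ N₂ = M₂ ⊓ N₃ := by
  rw [range_quotMap, ker_quotMap, map_mkQ_comap_subtype_eq_iff, inf_eq_right.mpr hM,
    sup_eq_left.mpr (inf_le_inf_left M₂ hN')]

end QuotMap

namespace DoubleComplex

variable {V : Type*} [AddCommGroup V] [Module ℂ V] (D : DoubleComplex V) (p q : ℤ)

lemma dolD_le_dolN : D.dolD p q ≤ D.dolN p q :=
  le_inf (D.dolD_le_ker p q) (D.dolD_le_K p q)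

lemma bcD_le_varDN : D.bcD p q ≤ D.varDN p q :=
  le_inf (D.bcD_le_dolD p q) ((D.bcD_le_conjD p q).trans (D.conjD_le_ker p q))

lemma varFD_le_aeN : D.varFD p q ≤ D.aeN p q :=
  sup_le (inf_le_inf_right _ D.ker_d2_le_ker_comp) (inf_le_inf_right _ D.ker_d1_le_ker_comp)

lemma dolN_sup_varED : D.dolN p q ⊔ D.varED p q = D.varFD p q := by
  rw [varED, sup_left_comm, sup_eq_left.mpr (D.dolD_le_dolN p q), sup_comm, dolN, varFD]

lemma varED_le_aeN : D.varED p q ≤ D.aeN p q :=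
  (le_sup_right.trans_eq (D.dolN_sup_varED p q)).trans (D.varFD_le_aeN p q)

lemma dolN_inf_ker_d1 : D.dolN p q ⊓ LinearMap.ker D.d1 = D.bcN p q := by
  rw [dolN, bcN, inf_comm, inf_assoc]

lemma bcN_inf_dolD : D.bcN p q ⊓ D.dolD p q = D.varDN p q := by
  rw [← dolN_inf_ker_d1, inf_right_comm, inf_eq_right.mpr (D.dolD_le_dolN p q), varDN]

lemma conjN_inf_dolN : D.conjN p q ⊓ D.dolN p q = D.bcN p q := by
  rw [conjN, dolN, bcN, ← inf_inf_distrib_right]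

lemma dolN_inf_varED : D.dolN p q ⊓ D.varED p q = D.bcN p q ⊔ D.dolD p q :=
  calc D.dolN p q ⊓ D.varED p q
      = (D.dolD p q ⊔ D.conjN p q) ⊓ D.dolN p q := by rw [varED, conjN, sup_comm, inf_comm]
    _ = D.dolD p q ⊔ D.conjN p q ⊓ D.dolN p q :=
        sup_inf_assoc_of_le _ (D.dolD_le_dolN p q)
    _ = D.bcN p q ⊔ D.dolD p q := by rw [conjN_inf_dolN, sup_comm]

lemma mapDBC_injective : Function.Injective (D.mapDBC p q) :=
  (quotMap_injective_iff _ _).mpr inf_le_right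

lemma range_mapDBC_eq_ker_mapBCDol :
    LinearMap.range (D.mapDBC p q) = LinearMap.ker (D.mapBCDol p q) := by
  refine (range_quotMap_eq_ker_quotMap_iff _ _ _ _).mpr ?_
  rw [bcN_inf_dolD, sup_eq_left.mpr (inf_le_right.trans (D.bcD_le_varDN p q))]

lemma range_mapBCDol_eq_ker_mapDolE :
    LinearMap.range (D.mapBCDol p q) = LinearMap.ker (D.mapDolE p q) := by
  refine (range_quotMap_eq_ker_quotMap_iff _ _ _ _).mpr ?_
  rw [dolN_inf_varED, inf_eq_right.mpr (D.dolD_le_dolN p q)]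

lemma range_mapDolE_eq_ker_mapEF :
    LinearMap.range (D.mapDolE p q) = LinearMap.ker (D.mapEF p q) := by
  refine (range_quotMap_eq_ker_quotMap_iff _ _ _ _).mpr ?_
  rw [inf_eq_right.mpr (D.varED_le_aeN p q), inf_eq_right.mpr (D.varFD_le_aeN p q),
    dolN_sup_varED]

lemma mapEF_surjective : Function.Surjective (D.mapEF p q) :=
  (quotMap_surjective_iff _ _).mpr sup_inf_self

end DoubleComplex

open DoubleComplex in
/-- **Varouchas' second exact sequence.** For a double complex of complex vector spaces
and every bidegree `(p,q)`, the sequence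
`0 → D^{p,q} → H_BC^{p,q} → H_∂̄^{p,q} → E^{p,q} → F^{p,q} → 0`
is exact, where the maps are induced by the inclusion `im ∂̄ ∩ ker ∂ ⊆ ker ∂ ∩ ker ∂̄`,
by the identity on representatives, and by the natural projection. -/
theorem varouchas_second_exact_sequence {V : Type*} [AddCommGroup V] [Module ℂ V]
    (D : DoubleComplex V) (p q : ℤ) :
    Function.Injective (D.mapDBC p q) ∧
    LinearMap.range (D.mapDBC p q) = LinearMap.ker (D.mapBCDol p q) ∧
    LinearMap.range (D.mapBCDol p q) = LinearMap.ker (D.mapDolE p q) ∧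
    LinearMap.range (D.mapDolE p q) = LinearMap.ker (D.mapEF p q) ∧
    Function.Surjective (D.mapEF p q) :=
  ⟨D.mapDBC_injective p q, D.range_mapDBC_eq_ker_mapBCDol p q,
    D.range_mapBCDol_eq_ker_mapDolE p q, D.range_mapDolE_eq_ker_mapEF p q, D.mapEF_surjective p q⟩
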